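/- Let m = n, let A ∈ ℝ^{n×n} be invertible with smallest singular value α_min > 0, and let H : ℝ^{2n} → ℝ be differentiable and μ-strongly convex with respect to the ℓ₂-norm, with minimizer z* = argmin H. If (z_k) satisfies the backward method z_{k+1} = z_k − η J ∇H(z_{k+1}) with J = [[0, A],[−Aᵀ, 0]] and step size η > 0, then for all k ≥ 0: H(z_k) − H(z*) ≤ (H(z₀) − H(z*)) / (1 + η² α_min² μ²)^k. -/

import Mathlib

open RealInnerProductSpace Matrix

/-!
A step of the backward method moves orthogonally to the new gradient `g`, so the linear term of the
strong convexity inequality at the new point vanishes and the energy drops by at least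
`μ / 2 * ‖step‖ ^ 2 ≥ μ / 2 * (η * α * ‖g‖) ^ 2`. The Polyak–Łojasiewicz inequality bounds
`‖g‖ ^ 2` below by `2 * μ` times the new energy gap, so the gap shrinks by the factor
`1 + η ^ 2 * α ^ 2 * μ ^ 2`.
-/

section SkewSymmetric

variable {m n : Type*}

lemma inner_toEuclideanLin_self_eq_zero_of_transpose_eq_neg [Fintype n] [DecidableEq n]
    {M : Matrix n n ℝ} (hM : Mᵀ = -M) (v : EuclideanSpace ℝ n) :
    ⟪v, toEuclideanLin M v⟫ = 0 := by
  have adjoint_eq_neg : (toEuclideanLin M).adjoint = -toEuclideanLin M := by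
    rw [← toEuclideanLin_conjTranspose_eq_adjoint, conjTranspose_eq_transpose_of_trivial, hM,
      map_neg]
  have inner_eq_neg : ⟪v, toEuclideanLin M v⟫ = -⟪v, toEuclideanLin M v⟫ := by
    conv_lhs => rw [← LinearMap.adjoint_inner_left, adjoint_eq_neg, LinearMap.neg_apply,
      inner_neg_left, real_inner_comm]
  exact self_eq_neg.mp inner_eq_neg

lemma transpose_fromBlocks_zero_neg_transpose {R : Type*} [AddGroup R] (A : Matrix m n R) :
    (fromBlocks 0 A (-Aᵀ) 0)ᵀ = -fromBlocks 0 A (-Aᵀ) 0 := by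
  simp [fromBlocks_transpose, fromBlocks_neg]

end SkewSymmetric

section BlockAntidiagonal

variable {𝕜 l m n o : Type*} [RCLike 𝕜] [Fintype l] [Fintype m] [Fintype n] [Fintype o]

lemma norm_sq_eq_norm_sq_inl_add_norm_sq_inr (v : EuclideanSpace 𝕜 (m ⊕ n)) :
    ‖v‖ ^ 2 = ‖WithLp.toLp 2 (v.ofLp ∘ Sum.inl)‖ ^ 2 + ‖WithLp.toLp 2 (v.ofLp ∘ Sum.inr)‖ ^ 2 := by
  simp only [EuclideanSpace.norm_sq_eq, Fintype.sum_sum_type, Function.comp_apply]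

variable [DecidableEq m] [DecidableEq n]

lemma norm_sq_toEuclideanLin_fromBlocks_antidiagonal (B : Matrix l n 𝕜) (C : Matrix o m 𝕜)
    (v : EuclideanSpace 𝕜 (m ⊕ n)) :
    ‖toEuclideanLin (fromBlocks 0 B C 0) v‖ ^ 2 =
      ‖toEuclideanLin B (WithLp.toLp 2 (v.ofLp ∘ Sum.inr))‖ ^ 2 +
        ‖toEuclideanLin C (WithLp.toLp 2 (v.ofLp ∘ Sum.inl))‖ ^ 2 := by
  simp [norm_sq_eq_norm_sq_inl_add_norm_sq_inr, toLpLin_apply, fromBlocks_mulVec]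

lemma mul_norm_le_norm_toEuclideanLin_fromBlocks_antidiagonal {α : ℝ} (hα : 0 ≤ α)
    {B : Matrix l n 𝕜} {C : Matrix o m 𝕜}
    (hB : ∀ v : EuclideanSpace 𝕜 n, α * ‖v‖ ≤ ‖toEuclideanLin B v‖)
    (hC : ∀ v : EuclideanSpace 𝕜 m, α * ‖v‖ ≤ ‖toEuclideanLin C v‖)
    (v : EuclideanSpace 𝕜 (m ⊕ n)) :
    α * ‖v‖ ≤ ‖toEuclideanLin (fromBlocks 0 B C 0) v‖ := by
  rw [← sq_le_sq₀ (by positivity) (norm_nonneg _)]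
  set p : EuclideanSpace 𝕜 m := WithLp.toLp 2 (v.ofLp ∘ Sum.inl)
  set q : EuclideanSpace 𝕜 n := WithLp.toLp 2 (v.ofLp ∘ Sum.inr)
  calc (α * ‖v‖) ^ 2 = (α * ‖q‖) ^ 2 + (α * ‖p‖) ^ 2 := by
        rw [mul_pow, norm_sq_eq_norm_sq_inl_add_norm_sq_inr]; ring
    _ ≤ ‖toEuclideanLin B q‖ ^ 2 + ‖toEuclideanLin C p‖ ^ 2 := by
        gcongr
        exacts [hB q, hC p]
    _ = ‖toEuclideanLin (fromBlocks 0 B C 0) v‖ ^ 2 :=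
        (norm_sq_toEuclideanLin_fromBlocks_antidiagonal B C v).symm

end BlockAntidiagonal

section BackwardMethod

variable {E : Type*} [NormedAddCommGroup E] [InnerProductSpace ℝ E] {μ η α : ℝ} {H : E → ℝ}

/-- `g` is a subgradient of `H` at `x` with modulus `μ`: the paraboloid of curvature `μ` with slope
`g` that touches `H` at `x` lies below `H`. A differentiable function is `μ`-strongly convex when
its gradient has this property at every point; here `g` is an arbitrary vector, not `gradient H x`,
so that kinks of `H` are covered as well. -/
def IsStrongSubgradientAt (μ : ℝ) (H : E → ℝ) (g x : E) : Prop :=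
  ∀ y, H x + ⟪g, y - x⟫ + μ / 2 * ‖y - x‖ ^ 2 ≤ H y

namespace IsStrongSubgradientAt

variable {g d x y : E}

lemma polyak_lojasiewicz (hg : IsStrongSubgradientAt μ H g x) (hμ : 0 ≤ μ) (w : E) :
    2 * μ * (H x - H w) ≤ ‖g‖ ^ 2 := by
  have complete_square : ‖g + μ • (w - x)‖ ^ 2 =
      ‖g‖ ^ 2 + 2 * μ * (⟪g, w - x⟫ + μ / 2 * ‖w - x‖ ^ 2) := by
    rw [norm_add_sq_real, inner_smul_right, norm_smul, mul_pow, Real.norm_eq_abs, sq_abs]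
    ring
  calc 2 * μ * (H x - H w)
      ≤ 2 * μ * -(⟪g, w - x⟫ + μ / 2 * ‖w - x‖ ^ 2) := by gcongr; linarith [hg w]
    _ = ‖g‖ ^ 2 - ‖g + μ • (w - x)‖ ^ 2 := by rw [complete_square]; ring
    _ ≤ ‖g‖ ^ 2 := sub_le_self _ (sq_nonneg _)

lemma mul_sub_le_sub_of_backward_step (hg : IsStrongSubgradientAt μ H g x) (hμ : 0 ≤ μ)
    (horth : ⟪g, d⟫ = 0) (hα : 0 ≤ α) (hd : α * ‖g‖ ≤ ‖d‖) (hstep : x = y - η • d) (w : E) :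
    (1 + η ^ 2 * α ^ 2 * μ ^ 2) * (H x - H w) ≤ H y - H w := by
  have hyx : y - x = η • d := by rw [hstep, sub_sub_cancel]
  have energy_drop : H x + μ / 2 * (η ^ 2 * ‖d‖ ^ 2) ≤ H y := by
    simpa only [hyx, inner_smul_right, horth, mul_zero, add_zero, norm_smul, mul_pow,
      Real.norm_eq_abs, sq_abs] using hg y
  have gap_le_drop : η ^ 2 * α ^ 2 * μ ^ 2 * (H x - H w) ≤ μ / 2 * (η ^ 2 * ‖d‖ ^ 2) :=
    calc η ^ 2 * α ^ 2 * μ ^ 2 * (H x - H w)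
        = μ / 2 * (η ^ 2 * (α ^ 2 * (2 * μ * (H x - H w)))) := by ring
      _ ≤ μ / 2 * (η ^ 2 * (α ^ 2 * ‖g‖ ^ 2)) := by gcongr; exact hg.polyak_lojasiewicz hμ w
      _ = μ / 2 * (η ^ 2 * (α * ‖g‖) ^ 2) := by rw [mul_pow]
      _ ≤ μ / 2 * (η ^ 2 * ‖d‖ ^ 2) := by gcongr
  linarith

end IsStrongSubgradientAt

theorem backward_method_energy_decrease_strongly_convex_general {J : E → E}
    (hJorth : ∀ v, ⟪v, J v⟫ = 0) (hα : 0 ≤ α) (hJ : ∀ v, α * ‖v‖ ≤ ‖J v‖) (hμ : 0 ≤ μ)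
    {z g : ℕ → E} (hg : ∀ k, IsStrongSubgradientAt μ H (g (k + 1)) (z (k + 1)))
    (hz : ∀ k, z (k + 1) = z k - η • J (g (k + 1))) (w : E) (k : ℕ) :
    H (z k) - H w ≤ (H (z 0) - H w) / (1 + η ^ 2 * α ^ 2 * μ ^ 2) ^ k := by
  have rate_pos : 0 < 1 + η ^ 2 * α ^ 2 * μ ^ 2 := by positivity
  rw [div_eq_inv_mul, ← inv_pow]
  refine le_geom (u := fun k ↦ H (z k) - H w) (inv_nonneg.2 rate_pos.le) k fun j _ ↦ ?_
  rw [le_inv_mul_iff₀ rate_pos]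
  exact (hg j).mul_sub_le_sub_of_backward_step hμ (hJorth _) hα (hJ _) (hz j) w

end BackwardMethod

/-- **The backward method decreases the energy exponentially fast for strongly convex `H`.**
If `A` is invertible with smallest singular value `α_min > 0` and `H` is `μ`-strongly convex,
then along `z_{k+1} = z_k − η J ∇H(z_{k+1})` one has
`H(z_k) − H(z*) ≤ (H(z₀) − H(z*)) / (1 + η² α_min² μ²)^k`. -/
theorem backward_method_energy_decrease_strongly_convex {n : ℕ}
    (A : Matrix (Fin n) (Fin n) ℝ) (hAunit : IsUnit A)
    (αmin : ℝ) (hαmin : 0 < αmin)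
    -- `αmin` is (a lower bound for) the smallest singular value of `A`
    (hA : ∀ v : EuclideanSpace ℝ (Fin n), αmin * ‖v‖ ≤ ‖Matrix.toEuclideanLin A v‖)
    (hAT : ∀ v : EuclideanSpace ℝ (Fin n), αmin * ‖v‖ ≤ ‖Matrix.toEuclideanLin Aᵀ v‖)
    (H : EuclideanSpace ℝ (Fin n ⊕ Fin n) → ℝ) (hH : Differentiable ℝ H)
    (μ : ℝ) (hμ : 0 < μ)
    -- `H` is `μ`-strongly convex with respect to the `ℓ₂`-norm
    (hsc : ∀ w w', H w + ⟪gradient H w, w' - w⟫ + μ / 2 * ‖w' - w‖ ^ 2 ≤ H w')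
    (zstar : EuclideanSpace ℝ (Fin n ⊕ Fin n)) (hmin : ∀ w, H zstar ≤ H w)
    (η : ℝ) (hη : 0 < η)
    (z : ℕ → EuclideanSpace ℝ (Fin n ⊕ Fin n))
    (hz : ∀ k, z (k+1) = z k -
      η • Matrix.toEuclideanLin (Matrix.fromBlocks 0 A (-Aᵀ) 0) (gradient H (z (k+1)))) :
    ∀ k : ℕ, H (z k) - H zstar ≤ (H (z 0) - H zstar) / (1 + η ^ 2 * αmin ^ 2 * μ ^ 2) ^ k := by
  have hskew := inner_toEuclideanLin_self_eq_zero_of_transpose_eq_neg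
    (transpose_fromBlocks_zero_neg_transpose A)
  have hlower := mul_norm_le_norm_toEuclideanLin_fromBlocks_antidiagonal hαmin.le hA
    (C := -Aᵀ) (by simpa only [map_neg, LinearMap.neg_apply, norm_neg] using hAT)
  exact backward_method_energy_decrease_strongly_convex_general hskew hαmin.le hlower hμ.le
    (g := fun k ↦ gradient H (z k)) (fun k ↦ hsc (z (k + 1))) hz zstar
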